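/- arXiv:2111.11542 — 3 statements merged into one kernel-verified Lean document; each statement's English description precedes it below -/
import Mathlib

section
/- Let N < D, let X ∈ ℝ^{N×D} have full rank N, and let A be an invertible D×D matrix. Suppose β : [0,∞) → ℝ^D is a differentiable natural gradient flow trajectory for the data (X, y), i.e. F_X(β_t) β̇_t = −∇L_X(β_t) for all t ≥ 0, and β' : [0,∞) → ℝ^D is a differentiable natural gradient flow trajectory for the transformed data (XAᵀ, y), i.e. F_{XAᵀ}(β'_t) β̇'_t = −∇L_{XAᵀ}(β'_t) for all t ≥ 0. If the initial logits agree, X β_0 = X Aᵀ β'_0, then X β_t = X Aᵀ β'_t for all t ≥ 0. -/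
/-!
Natural gradient flow sees the data matrix `X` only through its column space `V`. Indeed the flow
equation says that the velocity `p = X β̇` of the logits `f = X β` lies in `V` and that
`φ(f)(1-φ(f)) p - r(f)` is orthogonal to `V`, where `r(f)ₙ = yₙ(1-φ(yₙ fₙ))`. As the weights
`φ(f)(1-φ(f))` are positive, this Galerkin problem has at most one solution `p`, and `p` is
Lipschitz in `f` as long as `f` stays in a compact set. By Grönwall's inequality the initial logits
then determine all later ones. Finally, `X Aᵀ` has the same column space as `X` when `A` is
invertible.
-/

open Matrix Set

/-- The logistic sigmoid `φ(u) = 1/(1+exp(-u))`. -/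
noncomputable def phi (u : ℝ) : ℝ := 1 / (1 + Real.exp (-u))

/-- Gradient of the logistic loss `L_X(β) = Σ_n log(1+exp(-y_n x_nᵀβ))` of a linear
classifier `β`, namely `∇L_X(β) = -Σ_n y_n (1-φ(y_n x_nᵀβ)) x_n`. -/
noncomputable def gradL {N D : ℕ} (X : Matrix (Fin N) (Fin D) ℝ) (y : Fin N → ℝ)
    (β : Fin D → ℝ) : Fin D → ℝ :=
  fun d => -∑ n, y n * (1 - phi (y n * ∑ i, X n i * β i)) * X n d

/-- Training-sample Fisher information matrix
`F_X(β) = Xᵀ diag(φ(x_nᵀβ)(1-φ(x_nᵀβ))) X`. -/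
noncomputable def fisher {N D : ℕ} (X : Matrix (Fin N) (Fin D) ℝ) (β : Fin D → ℝ) :
    Matrix (Fin D) (Fin D) ℝ :=
  Xᵀ * Matrix.diagonal (fun n => phi ((X *ᵥ β) n) * (1 - phi ((X *ᵥ β) n))) * X

section Galerkin

variable {ι : Type*} [Fintype ι]

lemma dotProduct_le_card_mul_norm_mul_norm (p r : ι → ℝ) :
    p ⬝ᵥ r ≤ Fintype.card ι * (‖p‖ * ‖r‖) := by
  have term_le (n : ι) : p n * r n ≤ ‖p‖ * ‖r‖ :=
    calc p n * r n ≤ ‖p n * r n‖ := Real.le_norm_self _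
      _ = ‖p n‖ * ‖r n‖ := norm_mul _ _
      _ ≤ ‖p‖ * ‖r‖ := by gcongr <;> exact norm_le_pi_norm _ n
  calc p ⬝ᵥ r ≤ Fintype.card ι • (‖p‖ * ‖r‖) :=
        Finset.sum_le_card_nsmul Finset.univ _ _ fun n _ ↦ term_le n
    _ = Fintype.card ι * (‖p‖ * ‖r‖) := nsmul_eq_mul _ _

lemma sq_norm_le_norm_inv_mul_dotProduct {s : ι → ℝ} (hs : ∀ n, 0 < s n) (p : ι → ℝ) :
    ‖p‖ ^ 2 ≤ ‖s⁻¹‖ * (p ⬝ᵥ (s * p)) := by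
  have term_nonneg (n : ι) : 0 ≤ p n * (s n * p n) := by
    rw [mul_left_comm]
    exact mul_nonneg (hs n).le (mul_self_nonneg _)
  have energy_nonneg : 0 ≤ p ⬝ᵥ (s * p) := Finset.sum_nonneg fun n _ ↦ term_nonneg n
  have entry_sq_le (n : ι) : ‖p n‖ ^ 2 ≤ ‖s⁻¹‖ * (p ⬝ᵥ (s * p)) :=
    calc ‖p n‖ ^ 2 = (s n)⁻¹ * (p n * (s n * p n)) := by
          rw [Real.norm_eq_abs, sq_abs]
          field [(hs n).ne']
      _ ≤ ‖s⁻¹‖ * (p ⬝ᵥ (s * p)) := by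
          gcongr
          · exact term_nonneg n
          · exact (Real.le_norm_self _).trans (norm_le_pi_norm s⁻¹ n)
          · exact Finset.single_le_sum (fun n _ ↦ term_nonneg n) (Finset.mem_univ n)
  refine (Real.le_sqrt (norm_nonneg p) (mul_nonneg (norm_nonneg _) energy_nonneg)).1 ?_
  exact (pi_norm_le_iff_of_nonneg (Real.sqrt_nonneg _)).2 fun n ↦
    Real.le_sqrt_of_sq_le (entry_sq_le n)

/-- `p` is the Galerkin solution in the trial space `V` of the diagonal linear system `s * p = r`:
it lies in `V` and its residual is orthogonal to `V`. The product `s * p` is entrywise. -/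
structure IsGalerkinSolution (V : Submodule ℝ (ι → ℝ)) (s r p : ι → ℝ) : Prop where
  mem : p ∈ V
  dotProduct_eq : ∀ w ∈ V, w ⬝ᵥ (s * p) = w ⬝ᵥ r

namespace IsGalerkinSolution

variable {V : Submodule ℝ (ι → ℝ)} {s s' r r' p q : ι → ℝ}

lemma norm_le (h : IsGalerkinSolution V s r p) (hs : ∀ n, 0 < s n) :
    ‖p‖ ≤ Fintype.card ι * ‖s⁻¹‖ * ‖r‖ := by
  rcases (norm_nonneg p).eq_or_lt with hp | hp
  · rw [← hp]
    positivity
  · refine le_of_mul_le_mul_right ?_ hp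
    calc ‖p‖ * ‖p‖ = ‖p‖ ^ 2 := (sq _).symm
      _ ≤ ‖s⁻¹‖ * (p ⬝ᵥ (s * p)) := sq_norm_le_norm_inv_mul_dotProduct hs p
      _ = ‖s⁻¹‖ * (p ⬝ᵥ r) := by rw [h.dotProduct_eq p h.mem]
      _ ≤ ‖s⁻¹‖ * (Fintype.card ι * (‖p‖ * ‖r‖)) := by
        gcongr
        exact dotProduct_le_card_mul_norm_mul_norm p r
      _ = Fintype.card ι * ‖s⁻¹‖ * ‖r‖ * ‖p‖ := by ring

lemma sub (hp : IsGalerkinSolution V s r p) (hq : IsGalerkinSolution V s' r' q) :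
    IsGalerkinSolution V s (r - r' - (s - s') * q) (p - q) where
  mem := V.sub_mem hp.mem hq.mem
  dotProduct_eq w hw := by
    have expand : s * (p - q) = s * p - s' * q - (s - s') * q := by ring
    rw [expand, dotProduct_sub, dotProduct_sub, dotProduct_sub, dotProduct_sub,
      hp.dotProduct_eq w hw, hq.dotProduct_eq w hw]

lemma norm_sub_le (hp : IsGalerkinSolution V s r p) (hq : IsGalerkinSolution V s' r' q)
    (hs : ∀ n, 0 < s n) :
    ‖p - q‖ ≤ Fintype.card ι * ‖s⁻¹‖ * (‖r - r'‖ + ‖s - s'‖ * ‖q‖) :=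
  calc ‖p - q‖ ≤ Fintype.card ι * ‖s⁻¹‖ * ‖r - r' - (s - s') * q‖ := (hp.sub hq).norm_le hs
    _ ≤ Fintype.card ι * ‖s⁻¹‖ * (‖r - r'‖ + ‖s - s'‖ * ‖q‖) := by
      gcongr
      exact (_root_.norm_sub_le _ _).trans (by gcongr; exact norm_mul_le _ _)

variable {σ ρ : (ι → ℝ) → ι → ℝ}

lemma exists_norm_sub_le_mul_norm_sub (hσ : LocallyLipschitz σ) (hρ : LocallyLipschitz ρ)
    (hσ_pos : ∀ x n, 0 < σ x n) {K : Set (ι → ℝ)} (hK : IsCompact K) :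
    ∃ M : ℝ, ∀ x ∈ K, ∀ y ∈ K, ∀ p q, IsGalerkinSolution V (σ x) (ρ x) p →
      IsGalerkinSolution V (σ y) (ρ y) q → ‖p - q‖ ≤ M * ‖x - y‖ := by
  have inv_continuous : Continuous fun x ↦ (σ x)⁻¹ := continuous_pi fun n ↦
    ((continuous_apply n).comp hσ.continuous).inv₀ fun x ↦ (hσ_pos x n).ne'
  obtain ⟨C, hC⟩ := hK.exists_bound_of_continuousOn inv_continuous.continuousOn
  obtain ⟨R, hR⟩ := hK.exists_bound_of_continuousOn hρ.continuous.continuousOn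
  obtain ⟨Lσ, hLσ⟩ := hσ.locallyLipschitzOn.exists_lipschitzOnWith_of_compact hK
  obtain ⟨Lρ, hLρ⟩ := hρ.locallyLipschitzOn.exists_lipschitzOnWith_of_compact hK
  refine ⟨Fintype.card ι * C * (Lρ + Lσ * (Fintype.card ι * C * R)),
    fun x hx y hy p q hp hq ↦ ?_⟩
  have C_nonneg : 0 ≤ C := (norm_nonneg _).trans (hC x hx)
  have norm_q_le : ‖q‖ ≤ Fintype.card ι * C * R :=
    (hq.norm_le (hσ_pos y)).trans (by gcongr; exacts [hC y hy, hR y hy])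
  calc ‖p - q‖
      ≤ Fintype.card ι * ‖(σ x)⁻¹‖ * (‖ρ x - ρ y‖ + ‖σ x - σ y‖ * ‖q‖) :=
        hp.norm_sub_le hq (hσ_pos x)
    _ ≤ Fintype.card ι * C *
          (Lρ * ‖x - y‖ + Lσ * ‖x - y‖ * (Fintype.card ι * C * R)) := by
        gcongr
        exacts [hC x hx, hLρ.norm_sub_le hx hy, hLσ.norm_sub_le hx hy]
    _ = Fintype.card ι * C * (Lρ + Lσ * (Fintype.card ι * C * R)) * ‖x - y‖ := by ring

theorem eqOn_of_hasDerivWithinAt (hσ : LocallyLipschitz σ) (hρ : LocallyLipschitz ρ)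
    (hσ_pos : ∀ x n, 0 < σ x n) {a : ℝ} {u v u' v' : ℝ → ι → ℝ}
    (hu : ∀ t ∈ Ici a, HasDerivWithinAt u (u' t) (Ici a) t)
    (hv : ∀ t ∈ Ici a, HasDerivWithinAt v (v' t) (Ici a) t)
    (hu' : ∀ t ∈ Ici a, IsGalerkinSolution V (σ (u t)) (ρ (u t)) (u' t))
    (hv' : ∀ t ∈ Ici a, IsGalerkinSolution V (σ (v t)) (ρ (v t)) (v' t))
    (hinit : u a = v a) : EqOn u v (Ici a) := by
  intro T hT
  have hu_cont : ContinuousOn u (Icc a T) :=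
    fun t ht ↦ (hu t ht.1).continuousWithinAt.mono Icc_subset_Ici_self
  have hv_cont : ContinuousOn v (Icc a T) :=
    fun t ht ↦ (hv t ht.1).continuousWithinAt.mono Icc_subset_Ici_self
  obtain ⟨M, hM⟩ := exists_norm_sub_le_mul_norm_sub (V := V) hσ hρ hσ_pos
    ((isCompact_Icc.image_of_continuousOn hu_cont).union
      (isCompact_Icc.image_of_continuousOn hv_cont))
  have velocity_bound : ∀ t ∈ Ico a T, ‖u' t - v' t‖ ≤ M * ‖u t - v t‖ := fun t ht ↦
    hM _ (.inl (mem_image_of_mem u (Ico_subset_Icc_self ht)))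
      _ (.inr (mem_image_of_mem v (Ico_subset_Icc_self ht))) _ _ (hu' t ht.1) (hv' t ht.1)
  have sub_eq_zero_on := eq_zero_of_abs_deriv_le_mul_abs_self_of_eq_zero_right
    (hu_cont.sub hv_cont)
    (fun t ht ↦ ((hu t ht.1).sub (hv t ht.1)).mono (Ici_subset_Ici.2 ht.1))
    (sub_eq_zero.2 hinit) velocity_bound
  exact sub_eq_zero.1 (sub_eq_zero_on T ⟨hT, le_rfl⟩)

end IsGalerkinSolution

end Galerkin

lemma phi_eq_sigmoid : phi = Real.sigmoid :=
  funext fun _ ↦ one_div _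

lemma contDiff_phi : ContDiff ℝ 1 phi :=
  phi_eq_sigmoid ▸ contDiff_sigmoid.of_le le_top

/-- The diagonal `φ(fₙ)(1-φ(fₙ))` of the Fisher information, as a function of the logits `f`. -/
noncomputable def logitWeight {ι : Type*} (f : ι → ℝ) : ι → ℝ :=
  fun n ↦ phi (f n) * (1 - phi (f n))

/-- The negative derivative `yₙ(1-φ(yₙ fₙ))` of the logistic loss in the logit `fₙ`. -/
noncomputable def logitResidual {ι : Type*} (y f : ι → ℝ) : ι → ℝ :=
  fun n ↦ y n * (1 - phi (y n * f n))

section Logit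

variable {ι : Type*}

lemma logitWeight_pos (f : ι → ℝ) (n : ι) : 0 < logitWeight f n := by
  rw [logitWeight, phi_eq_sigmoid]
  exact mul_pos (Real.sigmoid_pos _) (sub_pos.2 (Real.sigmoid_lt_one _))

variable [Fintype ι]

lemma locallyLipschitz_logitWeight : LocallyLipschitz (logitWeight : (ι → ℝ) → ι → ℝ) := by
  have phi_logit (n : ι) : ContDiff ℝ 1 fun f : ι → ℝ ↦ phi (f n) :=
    contDiff_phi.comp (contDiff_apply ℝ ℝ n)
  exact (contDiff_pi.2 fun n ↦
    (phi_logit n).mul (contDiff_const.sub (phi_logit n))).locallyLipschitz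

lemma locallyLipschitz_logitResidual (y : ι → ℝ) : LocallyLipschitz (logitResidual y) := by
  have phi_margin (n : ι) : ContDiff ℝ 1 fun f : ι → ℝ ↦ phi (y n * f n) :=
    contDiff_phi.comp (contDiff_const.mul (contDiff_apply ℝ ℝ n))
  exact (contDiff_pi.2 fun n ↦
    contDiff_const.mul (contDiff_const.sub (phi_margin n))).locallyLipschitz

end Logit

lemma hasDerivWithinAt_const_mulVec {m n : Type*} [Finite m] [Fintype n] {X : Matrix m n ℝ}
    {β : ℝ → n → ℝ} {d : n → ℝ} {s : Set ℝ} {t : ℝ} (h : HasDerivWithinAt β d s t) :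
    HasDerivWithinAt (fun t ↦ X *ᵥ β t) (X *ᵥ d) s t := by
  have := Fintype.ofFinite m
  exact X.mulVecLin.toContinuousLinearMap.hasFDerivAt.comp_hasDerivWithinAt t h

lemma range_mulVecLin_mul_transpose_of_isUnit {m n R : Type*} [Fintype n] [DecidableEq n]
    [CommRing R] (X : Matrix m n R) {A : Matrix n n R} (hA : IsUnit A) :
    LinearMap.range (X * Aᵀ).mulVecLin = LinearMap.range X.mulVecLin := by
  rw [mulVecLin_mul]
  refine LinearMap.range_comp_of_range_eq_top _ (LinearMap.range_eq_top.2 ?_)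
  exact mulVec_surjective_iff_isUnit.2 ((isUnit_transpose A).2 hA)

section NaturalGradientFlow

variable {N D : ℕ} (X : Matrix (Fin N) (Fin D) ℝ)

lemma fisher_mulVec (b d : Fin D → ℝ) :
    fisher X b *ᵥ d = Xᵀ *ᵥ (logitWeight (X *ᵥ b) * X *ᵥ d) := by
  rw [fisher, ← mulVec_mulVec, ← mulVec_mulVec]
  congr 1
  exact funext fun n ↦ mulVec_diagonal _ _ n

lemma neg_gradL_eq_transpose_mulVec (y : Fin N → ℝ) (b : Fin D → ℝ) :
    -gradL X y b = Xᵀ *ᵥ logitResidual y (X *ᵥ b) := by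
  ext k
  simp only [gradL, logitResidual, Pi.neg_apply, neg_neg, mulVec, dotProduct, transpose_apply,
    mul_comm (X _ k)]

variable {X}

lemma isGalerkinSolution_of_fisher_mulVec_eq {y : Fin N → ℝ} {b d : Fin D → ℝ}
    (h : fisher X b *ᵥ d = -gradL X y b) :
    IsGalerkinSolution (LinearMap.range X.mulVecLin) (logitWeight (X *ᵥ b))
      (logitResidual y (X *ᵥ b)) (X *ᵥ d) where
  mem := ⟨d, rfl⟩
  dotProduct_eq := by
    rintro _ ⟨a, rfl⟩
    rw [fisher_mulVec, neg_gradL_eq_transpose_mulVec] at h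
    rw [mulVecLin_apply, dotProduct_comm, ← dotProduct_transpose_mulVec, h,
      dotProduct_transpose_mulVec, dotProduct_comm]

theorem ngf_logit_invariance_underparametrized_general {D' : ℕ} {Z : Matrix (Fin N) (Fin D') ℝ}
    (hrange : LinearMap.range Z.mulVecLin = LinearMap.range X.mulVecLin) {y : Fin N → ℝ}
    {β dβ : ℝ → Fin D → ℝ} {β' dβ' : ℝ → Fin D' → ℝ}
    (hβdiff : ∀ t ∈ Ici (0 : ℝ), HasDerivWithinAt β (dβ t) (Ici 0) t)
    (hβ'diff : ∀ t ∈ Ici (0 : ℝ), HasDerivWithinAt β' (dβ' t) (Ici 0) t)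
    (hflow : ∀ t ∈ Ici (0 : ℝ), fisher X (β t) *ᵥ dβ t = -gradL X y (β t))
    (hflow' : ∀ t ∈ Ici (0 : ℝ), fisher Z (β' t) *ᵥ dβ' t = -gradL Z y (β' t))
    (hinit : X *ᵥ β 0 = Z *ᵥ β' 0) :
    ∀ t ∈ Ici (0 : ℝ), X *ᵥ β t = Z *ᵥ β' t :=
  IsGalerkinSolution.eqOn_of_hasDerivWithinAt
    locallyLipschitz_logitWeight (locallyLipschitz_logitResidual y) logitWeight_pos
    (fun t ht ↦ hasDerivWithinAt_const_mulVec (hβdiff t ht))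
    (fun t ht ↦ hasDerivWithinAt_const_mulVec (hβ'diff t ht))
    (fun t ht ↦ isGalerkinSolution_of_fisher_mulVec_eq (hflow t ht))
    (fun t ht ↦ hrange ▸ isGalerkinSolution_of_fisher_mulVec_eq (hflow' t ht)) hinit

end NaturalGradientFlow

/-- **Theorem 1**: with `N < D` and `X` of full rank `N`, natural gradient flow on the
logistic loss has invariant logits under invertible transformations `A` of the data. -/
theorem ngf_logit_invariance_underparametrized {N D : ℕ} (hND : N < D)
    (X : Matrix (Fin N) (Fin D) ℝ) (hX : X.rank = N)
    (A : Matrix (Fin D) (Fin D) ℝ) (hA : IsUnit A)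
    (y : Fin N → ℝ) (hy : ∀ n, y n = 1 ∨ y n = -1)
    (β β' dβ dβ' : ℝ → Fin D → ℝ)
    (hβdiff : ∀ t ∈ Ici (0:ℝ), HasDerivWithinAt β (dβ t) (Ici 0) t)
    (hβ'diff : ∀ t ∈ Ici (0:ℝ), HasDerivWithinAt β' (dβ' t) (Ici 0) t)
    (hflow : ∀ t ∈ Ici (0:ℝ), fisher X (β t) *ᵥ dβ t = -gradL X y (β t))
    (hflow' : ∀ t ∈ Ici (0:ℝ),
      fisher (X * Aᵀ) (β' t) *ᵥ dβ' t = -gradL (X * Aᵀ) y (β' t))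
    (hinit : X *ᵥ β 0 = (X * Aᵀ) *ᵥ β' 0) :
    ∀ t ∈ Ici (0:ℝ), X *ᵥ β t = (X * Aᵀ) *ᵥ β' t :=
  ngf_logit_invariance_underparametrized_general (range_mulVecLin_mul_transpose_of_isUnit X hA)
    hβdiff hβ'diff hflow hflow' hinit
end

section
/- Let N ≥ D, let X ∈ ℝ^{N×D} have full column rank D, and let A be an invertible D×D matrix. Suppose β : [0,∞) → ℝ^D is a differentiable natural gradient flow trajectory for (X, y), i.e. F_X(β_t) β̇_t = −∇L_X(β_t), β' : [0,∞) → ℝ^D is a differentiable natural gradient flow trajectory for (XAᵀ, y), i.e. F_{XAᵀ}(β'_t) β̇'_t = −∇L_{XAᵀ}(β'_t), and Aᵀ β'_0 = β_0. Then the logit trajectories coincide: X Aᵀ β'_t = X β_t for all t ≥ 0. -/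
/-!
The natural gradient flow is invariant under linear reparametrisation: `L_{XAᵀ}(b) = L_X(Aᵀb)`, so
both sides of the flow equation for `XAᵀ` are `A` applied to the corresponding sides for `X` at
`Aᵀb`, and cancelling `A` shows that `Aᵀβ'` is a flow for `X`. It remains to see that the initial
logits determine the logits of a flow for `X`. For labels `±1` the Fisher matrix is the Hessian of
the loss, so `d/dt ∇L(β_t) = F(β_t) β̇_t = -∇L(β_t)` and `∇L(β_t) = e^{-t} ∇L(β_0)`. Finally, the
gradient determines the logits, because the loss is strictly convex as a function of them.
-/

open Matrix Set

lemma mulVec_eq_of_transpose_mulVec_strictMono_eq {ι κ R : Type*} [Fintype ι] [Fintype κ]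
    [CommRing R] [LinearOrder R] [IsStrictOrderedRing R] {f : ι → R → R}
    (hf : ∀ n, StrictMono (f n)) (X : Matrix ι κ R) {b c : κ → R}
    (h : Xᵀ *ᵥ (fun n => f n ((X *ᵥ b) n)) = Xᵀ *ᵥ fun n => f n ((X *ᵥ c) n)) :
    X *ᵥ b = X *ᵥ c := by
  set z := X *ᵥ b with hz
  set w := X *ᵥ c with hw
  have hsum : ∑ n, (f n (z n) - f n (w n)) * (z n - w n) = 0 :=
    calc ((fun n => f n (z n)) - fun n => f n (w n)) ⬝ᵥ (z - w)
        = (Xᵀ *ᵥ ((fun n => f n (z n)) - fun n => f n (w n))) ⬝ᵥ (b - c) := by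
          rw [hz, hw, ← mulVec_sub, dotProduct_mulVec, mulVec_transpose]
      _ = 0 := by rw [mulVec_sub, h, sub_self, zero_dotProduct]
  have hnonneg : ∀ n ∈ Finset.univ, 0 ≤ (f n (z n) - f n (w n)) * (z n - w n) := fun n _ =>
    ((hf n).monotone.monovary monotone_id).sub_mul_sub_nonneg (w n) (z n)
  funext n
  rcases mul_eq_zero.1 ((Finset.sum_eq_zero_iff_of_nonneg hnonneg).1 hsum n (Finset.mem_univ n))
    with hfn | hn
  · exact (hf n).injective (sub_eq_zero.1 hfn)
  · exact sub_eq_zero.1 hn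

lemma hasFDerivAt_mulVec_comp_mulVec {ι κ μ 𝕜 : Type*} [Fintype ι] [DecidableEq ι]
    [Fintype κ] [Finite μ] [NontriviallyNormedField 𝕜] [CompleteSpace 𝕜]
    (Y : Matrix μ ι 𝕜) (X : Matrix ι κ 𝕜) {f : ι → 𝕜 → 𝕜} {f' : ι → 𝕜} {b : κ → 𝕜}
    (hf : ∀ n, HasDerivAt (f n) (f' n) ((X *ᵥ b) n)) :
    HasFDerivAt (fun c => Y *ᵥ fun n => f n ((X *ᵥ c) n))
      (Y * diagonal f' * X).mulVecLin.toContinuousLinearMap b := by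
  have := Fintype.ofFinite μ
  have hdiag : HasFDerivAt (fun (z : ι → 𝕜) n => f n (z n))
      (diagonal f').mulVecLin.toContinuousLinearMap (X *ᵥ b) := by
    refine hasFDerivAt_pi'' fun n => ?_
    refine ((hf n).comp_hasFDerivAt (X *ᵥ b) (hasFDerivAt_apply n (X *ᵥ b))).congr_fderiv ?_
    ext v
    simp [mulVec_diagonal]
  have h := Y.mulVecLin.toContinuousLinearMap.hasFDerivAt.comp b
    (hdiag.comp b X.mulVecLin.toContinuousLinearMap.hasFDerivAt)
  refine h.congr_fderiv ?_
  ext v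
  simp [mulVec_mulVec, Matrix.mul_assoc]

lemma eq_exp_smul_of_hasDerivWithinAt_smul {E : Type*} [NormedAddCommGroup E] [NormedSpace ℝ E]
    {s : Set ℝ} (hs : Convex ℝ s) {k : ℝ} {u : ℝ → E}
    (hu : ∀ t ∈ s, HasDerivWithinAt u (k • u t) s t) {a t : ℝ} (ha : a ∈ s) (ht : t ∈ s) :
    u t = Real.exp (k * (t - a)) • u a := by
  have hderiv : ∀ r ∈ s, HasDerivWithinAt (fun r => Real.exp (-(k * (r - a))) • u r) 0 s r := by
    intro r hr
    have hexp := (((hasDerivAt_id r).sub_const a).const_mul k).neg.exp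
    refine (hexp.hasDerivWithinAt.fun_smul (hu r hr)).congr_deriv ?_
    simp [smul_smul, mul_comm]
  have hconst : Real.exp (-(k * (t - a))) • u t = u a := by
    have := hs.norm_image_sub_le_of_norm_hasDerivWithin_le (C := 0) hderiv (by simp) ha ht
    simpa [sub_eq_zero] using this
  rw [← hconst, smul_smul, ← Real.exp_add, add_neg_cancel, Real.exp_zero, one_smul]

/-- The derivative `-y (1 - φ(yz))` in the logit `z` of the loss `log (1 + exp (-yz))` of a single
sample with label `y`. -/
noncomputable def logisticLossDeriv (y z : ℝ) : ℝ := -(y * (1 - phi (y * z)))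

lemma logisticLossDeriv_strictMono {y : ℝ} (hy : y ≠ 0) : StrictMono (logisticLossDeriv y) := by
  intro z w hzw
  have hmul : y * phi (y * z) < y * phi (y * w) := by
    rw [phi_eq_sigmoid]
    rcases hy.lt_or_gt with hneg | hpos
    · exact mul_lt_mul_of_neg_left (Real.sigmoid_lt (mul_lt_mul_of_neg_left hzw hneg)) hneg
    · exact mul_lt_mul_of_pos_left (Real.sigmoid_lt (mul_lt_mul_of_pos_left hzw hpos)) hpos
  simp only [logisticLossDeriv]
  linarith

lemma logisticLossDeriv_eq_phi_sub {y : ℝ} (hy : y = 1 ∨ y = -1) (z : ℝ) :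
    logisticLossDeriv y z = phi z - (1 + y) / 2 := by
  rcases hy with rfl | rfl
  · norm_num [logisticLossDeriv]
  · norm_num [logisticLossDeriv, phi_eq_sigmoid, Real.sigmoid_neg]

lemma hasDerivAt_logisticLossDeriv {y : ℝ} (hy : y = 1 ∨ y = -1) (z : ℝ) :
    HasDerivAt (logisticLossDeriv y) (phi z * (1 - phi z)) z := by
  rw [funext (logisticLossDeriv_eq_phi_sub hy), phi_eq_sigmoid]
  exact (Real.hasDerivAt_sigmoid z).sub_const _

section NaturalGradientFlow

variable {N D D' : ℕ} {X : Matrix (Fin N) (Fin D) ℝ} {A : Matrix (Fin D') (Fin D) ℝ}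
  {y : Fin N → ℝ}

lemma gradL_eq_transpose_mulVec (X : Matrix (Fin N) (Fin D) ℝ) (y : Fin N → ℝ) (b : Fin D → ℝ) :
    gradL X y b = Xᵀ *ᵥ fun n => logisticLossDeriv (y n) ((X *ᵥ b) n) := by
  funext d
  simp only [gradL, logisticLossDeriv, mulVec, dotProduct, transpose_apply,
    ← Finset.sum_neg_distrib]
  exact Finset.sum_congr rfl fun n _ => by ring

lemma gradL_mul_transpose (X : Matrix (Fin N) (Fin D) ℝ) (A : Matrix (Fin D') (Fin D) ℝ)
    (y : Fin N → ℝ) (b : Fin D' → ℝ) :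
    gradL (X * Aᵀ) y b = A *ᵥ gradL X y (Aᵀ *ᵥ b) := by
  simp only [gradL_eq_transpose_mulVec, mulVec_mulVec, transpose_mul, transpose_transpose]

lemma fisher_mul_transpose (X : Matrix (Fin N) (Fin D) ℝ) (A : Matrix (Fin D') (Fin D) ℝ)
    (b : Fin D' → ℝ) : fisher (X * Aᵀ) b = A * fisher X (Aᵀ *ᵥ b) * Aᵀ := by
  simp only [fisher, mulVec_mulVec, transpose_mul, transpose_transpose, Matrix.mul_assoc]

lemma mulVec_eq_of_gradL_eq (hy : ∀ n, y n ≠ 0) {b c : Fin D → ℝ}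
    (h : gradL X y b = gradL X y c) : X *ᵥ b = X *ᵥ c := by
  rw [gradL_eq_transpose_mulVec, gradL_eq_transpose_mulVec] at h
  exact mulVec_eq_of_transpose_mulVec_strictMono_eq
    (fun n => logisticLossDeriv_strictMono (hy n)) X h

lemma hasFDerivAt_gradL (X : Matrix (Fin N) (Fin D) ℝ) (hy : ∀ n, y n = 1 ∨ y n = -1)
    (b : Fin D → ℝ) :
    HasFDerivAt (gradL X y) (fisher X b).mulVecLin.toContinuousLinearMap b := by
  rw [funext (gradL_eq_transpose_mulVec X y)]
  exact hasFDerivAt_mulVec_comp_mulVec Xᵀ X fun n => hasDerivAt_logisticLossDeriv (hy n) _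

/-- `β` is a natural gradient flow trajectory on `[0, ∞)` for the data `(X, y)`, with velocity `dβ`.
The derivative is taken within `[0, ∞)`, hence one-sided at `0`. -/
structure IsNaturalGradientFlow (X : Matrix (Fin N) (Fin D) ℝ) (y : Fin N → ℝ)
    (β dβ : ℝ → Fin D → ℝ) : Prop where
  hasDerivWithinAt : ∀ t ∈ Ici (0 : ℝ), HasDerivWithinAt β (dβ t) (Ici 0) t
  fisher_mulVec : ∀ t ∈ Ici (0 : ℝ), fisher X (β t) *ᵥ dβ t = -gradL X y (β t)

namespace IsNaturalGradientFlow

variable {β dβ γ dγ : ℝ → Fin D → ℝ}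

lemma transpose_mulVec {β' dβ' : ℝ → Fin D' → ℝ} (hA : Function.Injective A.mulVec)
    (h : IsNaturalGradientFlow (X * Aᵀ) y β' dβ') :
    IsNaturalGradientFlow X y (fun t => Aᵀ *ᵥ β' t) (fun t => Aᵀ *ᵥ dβ' t) where
  hasDerivWithinAt t ht :=
    Aᵀ.mulVecLin.toContinuousLinearMap.hasFDerivAt.comp_hasDerivWithinAt t
      (h.hasDerivWithinAt t ht)
  fisher_mulVec t ht := hA <|
    calc A *ᵥ (fisher X (Aᵀ *ᵥ β' t) *ᵥ (Aᵀ *ᵥ dβ' t))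
        = fisher (X * Aᵀ) (β' t) *ᵥ dβ' t := by
          rw [fisher_mul_transpose, mulVec_mulVec, mulVec_mulVec]
      _ = -gradL (X * Aᵀ) y (β' t) := h.fisher_mulVec t ht
      _ = A *ᵥ (-gradL X y (Aᵀ *ᵥ β' t)) := by rw [gradL_mul_transpose, mulVec_neg]

lemma gradL_eq_exp_smul (hy : ∀ n, y n = 1 ∨ y n = -1) (h : IsNaturalGradientFlow X y β dβ)
    {t : ℝ} (ht : t ∈ Ici (0 : ℝ)) :
    gradL X y (β t) = Real.exp (-t) • gradL X y (β 0) := by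
  have hderiv : ∀ r ∈ Ici (0 : ℝ),
      HasDerivWithinAt (fun r => gradL X y (β r)) ((-1 : ℝ) • gradL X y (β r)) (Ici 0) r := by
    intro r hr
    rw [neg_one_smul, ← h.fisher_mulVec r hr]
    exact (hasFDerivAt_gradL X hy (β r)).comp_hasDerivWithinAt r (h.hasDerivWithinAt r hr)
  simpa using eq_exp_smul_of_hasDerivWithinAt_smul (convex_Ici 0) hderiv self_mem_Ici ht

theorem logits_eq_of_initial_logits_eq (hy : ∀ n, y n = 1 ∨ y n = -1)
    (hβ : IsNaturalGradientFlow X y β dβ) (hγ : IsNaturalGradientFlow X y γ dγ)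
    (hinit : X *ᵥ β 0 = X *ᵥ γ 0) {t : ℝ} (ht : t ∈ Ici (0 : ℝ)) : X *ᵥ β t = X *ᵥ γ t := by
  have hy₀ : ∀ n, y n ≠ 0 := fun n => by rcases hy n with h | h <;> simp [h]
  have hgrad₀ : gradL X y (β 0) = gradL X y (γ 0) := by
    rw [gradL_eq_transpose_mulVec, gradL_eq_transpose_mulVec, hinit]
  apply mulVec_eq_of_gradL_eq hy₀
  rw [hβ.gradL_eq_exp_smul hy ht, hγ.gradL_eq_exp_smul hy ht, hgrad₀]

end IsNaturalGradientFlow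

theorem ngf_logit_invariance_overdetermined_general (hA : Function.Injective A.mulVec)
    (hy : ∀ n, y n = 1 ∨ y n = -1) {β dβ : ℝ → Fin D → ℝ} {β' dβ' : ℝ → Fin D' → ℝ}
    (h : IsNaturalGradientFlow X y β dβ) (h' : IsNaturalGradientFlow (X * Aᵀ) y β' dβ')
    (hinit : (X * Aᵀ) *ᵥ β' 0 = X *ᵥ β 0) :
    ∀ t ∈ Ici (0 : ℝ), (X * Aᵀ) *ᵥ β' t = X *ᵥ β t := by
  intro t ht
  rw [← mulVec_mulVec] at hinit ⊢
  exact (h'.transpose_mulVec hA).logits_eq_of_initial_logits_eq hy h hinit ht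

end NaturalGradientFlow

/-- **Conclusion** (logit invariance in the overdetermined case): with `N ≥ D`, `X` of
full column rank and `A` invertible, the logit trajectories of NGF on `(X, y)` and on
`(XAᵀ, y)` coincide. -/
theorem ngf_logit_invariance_overdetermined {N D : ℕ} (hND : D ≤ N)
    (X : Matrix (Fin N) (Fin D) ℝ) (hX : X.rank = D)
    (A : Matrix (Fin D) (Fin D) ℝ) (hA : IsUnit A)
    (y : Fin N → ℝ) (hy : ∀ n, y n = 1 ∨ y n = -1)
    (β β' dβ dβ' : ℝ → Fin D → ℝ)
    (hβdiff : ∀ t ∈ Ici (0:ℝ), HasDerivWithinAt β (dβ t) (Ici 0) t)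
    (hβ'diff : ∀ t ∈ Ici (0:ℝ), HasDerivWithinAt β' (dβ' t) (Ici 0) t)
    (hflow : ∀ t ∈ Ici (0:ℝ), fisher X (β t) *ᵥ dβ t = -gradL X y (β t))
    (hflow' : ∀ t ∈ Ici (0:ℝ),
      fisher (X * Aᵀ) (β' t) *ᵥ dβ' t = -gradL (X * Aᵀ) y (β' t))
    (hinit : Aᵀ *ᵥ β' 0 = β 0) :
    ∀ t ∈ Ici (0:ℝ), (X * Aᵀ) *ᵥ β' t = X *ᵥ β t :=
  ngf_logit_invariance_overdetermined_general (mulVec_injective_of_isUnit hA) hy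
    ⟨hβdiff, hflow⟩ ⟨hβ'diff, hflow'⟩ (by rw [← mulVec_mulVec, hinit])
end

section
/- Let a ∈ ℝ and let s : (a, ∞) → ℝ be differentiable with s'(t) = 1 + exp(−s(t)) for all t > a. Then the function t ↦ log(1 + exp(s(t))) − t is constant on (a, ∞); that is, there exists c ∈ ℝ such that log(1 + exp(s(t))) = t + c for all t > a. -/
/-!
The function `log (1 + exp x)` is a primitive of the logistic sigmoid `(1 + exp (-x))⁻¹`, which is
the reciprocal of the right-hand side of the equation. Along a solution it therefore has derivative
`1` in time.
-/

theorem exists_eq_smul_add_of_hasDerivWithinAt_const {𝕜 E : Type*} [RCLike 𝕜]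
    [NormedAddCommGroup E] [NormedSpace 𝕜 E] {I : Set 𝕜} (hI : Convex ℝ I) {f : 𝕜 → E} {v : E}
    (hf : ∀ t ∈ I, HasDerivWithinAt f v I t) :
    ∃ c : E, ∀ t ∈ I, f t = t • v + c := by
  rcases I.eq_empty_or_nonempty with rfl | ⟨t₀, ht₀⟩
  · exact ⟨0, fun t ht => ht.elim⟩
  have hderiv : ∀ t ∈ I, HasDerivWithinAt (fun u => f u - u • v) 0 I t := fun t ht => by
    simpa using (hf t ht).fun_sub ((hasDerivWithinAt_id t I).smul_const v)
  refine ⟨f t₀ - t₀ • v, fun t ht => ?_⟩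
  have hconst : f t - t • v = f t₀ - t₀ • v := by
    simpa [sub_eq_zero] using
      hI.norm_image_sub_le_of_norm_hasDerivWithin_le hderiv (fun _ _ => norm_zero.le) ht₀ ht
  exact sub_eq_iff_eq_add'.mp hconst

theorem hasDerivAt_log_one_add_exp (x : ℝ) :
    HasDerivAt (fun y => Real.log (1 + Real.exp y)) (Real.sigmoid x) x := by
  refine (((Real.hasDerivAt_exp x).const_add 1).log (by positivity)).congr_deriv ?_
  rw [Real.sigmoid_def, Real.exp_neg]
  field_simp
  ring

theorem ngf_scalar_ode_solution_general {I : Set ℝ} (hI : Convex ℝ I) {s : ℝ → ℝ}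
    (hs : ∀ t ∈ I, HasDerivWithinAt s (1 + Real.exp (-s t)) I t) :
    ∃ c : ℝ, ∀ t ∈ I, Real.log (1 + Real.exp (s t)) = t + c := by
  have hderiv : ∀ t ∈ I, HasDerivWithinAt (fun u => Real.log (1 + Real.exp (s u))) 1 I t := by
    intro t ht
    have hinv : Real.sigmoid (s t) * (1 + Real.exp (-s t)) = 1 :=
      inv_mul_cancel₀ (by positivity)
    exact ((hasDerivAt_log_one_add_exp (s t)).comp_hasDerivWithinAt t (hs t ht)).congr_deriv hinv
  simpa only [smul_eq_mul, mul_one] using exists_eq_smul_add_of_hasDerivWithinAt_const hI hderiv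

/-- The scalar ODE `s' = 1 + exp(-s)` arising from natural gradient flow on the logistic
loss for a single data point (with label `+1`) integrates to
`log(1 + exp(s(t))) = t + c`. -/
theorem ngf_scalar_ode_solution (a : ℝ) (s : ℝ → ℝ)
    (hs : ∀ t ∈ Set.Ioi a, HasDerivAt s (1 + Real.exp (-s t)) t) :
    ∃ c : ℝ, ∀ t ∈ Set.Ioi a, Real.log (1 + Real.exp (s t)) = t + c :=
  ngf_scalar_ode_solution_general (convex_Ioi a) fun t ht => (hs t ht).hasDerivWithinAt
end
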